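/- Let d ≥ 1, p ≥ 2 be integers, let Ω ⊆ ℝ^d be an open neighborhood of a point x0, let κ : Ω → ℂ be such that κ^2 is of class C^{p−2} on Ω, and let u : Ω → ℂ be of class C^{p+2} on Ω with Δu + κ^2 u = 0 on Ω and u(x0) ≠ 0. Then there exist a polynomial P ∈ ℂ[X_1,...,X_d] of total degree at most p satisfying the quasi-Trefftz property — all iterated derivatives of order at most p−2 of the function x ↦ ΔP(x) + Σ_{i=1}^d (∂_i P(x))^2 + κ(x)^2 vanish at x0 — together with a constant C > 0 and an open neighborhood U ⊆ Ω of x0, such that |u(x) − e^{P(x)}| ≤ C |x − x0|^{p+1} for all x ∈ U. -/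

import Mathlib

/-!
Near `x₀` write `u = exp v` with `v` a branch of the logarithm of `u`. Dividing
`Δ(exp v) = exp v * (Δv + ∇v · ∇v)` by `exp v` turns the Helmholtz equation into
`Δv + ∇v · ∇v + κ² = 0`. Let `P` be the Taylor polynomial of degree `p` of `v` at `x₀`. Since
`P - v` vanishes to order `p` at `x₀`, the difference
`(ΔP + ∇P · ∇P) - (Δv + ∇v · ∇v) = Δ(P - v) + ∇(P - v) · ∇(P + v)` vanishes to order `p - 2`,
which is the quasi-Trefftz property. As `exp` is locally Lipschitz, `u - exp P` is bounded near `x₀`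
by a multiple of the Taylor remainder of `v`.
-/

open Filter Topology Asymptotics

section Symmetry

variable {𝕜 E F : Type*} [NontriviallyNormedField 𝕜] [NormedAddCommGroup E] [NormedSpace 𝕜 E]
  [NormedAddCommGroup F] [NormedSpace 𝕜 F]
  {f : E → F} {x : E} {n : ℕ}

lemma iteratedFDeriv_succ_apply_eq_fderiv (hf : ContDiffAt 𝕜 (n + 1 : ℕ) f x)
    (v : Fin (n + 1) → E) :
    iteratedFDeriv 𝕜 (n + 1) f x v =
      fderiv 𝕜 (fun y => iteratedFDeriv 𝕜 n f y (Fin.tail v)) x (v 0) :=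
  (hf.differentiableAt_iteratedFDeriv (by norm_cast; omega)).iteratedFDeriv_succ_apply_left'

variable [IsRCLikeNormedField 𝕜]

lemma fderiv_fderiv_apply_comm (hf : ContDiffAt 𝕜 2 f x) (a b : E) :
    fderiv 𝕜 (fun y => fderiv 𝕜 f y a) x b = fderiv 𝕜 (fun y => fderiv 𝕜 f y b) x a := by
  have hdiff : DifferentiableAt 𝕜 (fderiv 𝕜 f) x :=
    (hf.fderiv_right (m := 1) (by norm_num)).differentiableAt one_ne_zero
  have happly (c d : E) : fderiv 𝕜 (fun y => fderiv 𝕜 f y c) x d =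
      fderiv 𝕜 (fderiv 𝕜 f) x d c := by
    simp [fderiv_clm_apply hdiff (differentiableAt_const c)]
  rw [happly, happly, hf.isSymmSndFDerivAt (by simp)]

lemma iteratedFDeriv_comp_swap_zero_one (hf : ContDiffAt 𝕜 (n + 2 : ℕ) f x)
    (v : Fin (n + 2) → E) :
    iteratedFDeriv 𝕜 (n + 2) f x (v ∘ Equiv.swap 0 1) = iteratedFDeriv 𝕜 (n + 2) f x v := by
  have happly (w : Fin (n + 2) → E) : iteratedFDeriv 𝕜 (n + 2) f x w =
      fderiv 𝕜 (fun y => fderiv 𝕜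
        (fun z => iteratedFDeriv 𝕜 n f z (Fin.tail (Fin.tail w))) y (w 1)) x (w 0) := by
    rw [iteratedFDeriv_succ_apply_eq_fderiv hf]
    congr 1
    refine EventuallyEq.fderiv_eq ?_
    filter_upwards [(hf.of_le (by norm_cast; omega : ((n + 1 : ℕ) : WithTop ℕ∞) ≤ _)).eventually
      (by simp)] with y hy
    exact iteratedFDeriv_succ_apply_eq_fderiv hy _
  have htail : Fin.tail (Fin.tail (v ∘ Equiv.swap 0 1)) = Fin.tail (Fin.tail v) := by
    ext j
    simp only [Fin.tail, Function.comp_apply]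
    rw [Equiv.swap_apply_of_ne_of_ne] <;> simp [Fin.ext_iff]
  have hsmooth : ContDiffAt 𝕜 2
      (fun z => iteratedFDeriv 𝕜 n f z (Fin.tail (Fin.tail v))) x :=
    (ContinuousMultilinearMap.apply 𝕜 (fun _ : Fin n => E) F _).contDiff.contDiffAt.comp x
      (hf.iteratedFDeriv_right (by norm_cast; omega))
  rw [happly, happly, htail]
  simpa using fderiv_fderiv_apply_comm hsmooth (v 0) (v 1)

lemma iteratedFDeriv_comp_swap_castSucc_succ (hf : ContDiffAt 𝕜 (n + 1 : ℕ) f x) (i : Fin n)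
    (v : Fin (n + 1) → E) :
    iteratedFDeriv 𝕜 (n + 1) f x (v ∘ Equiv.swap i.castSucc i.succ) =
      iteratedFDeriv 𝕜 (n + 1) f x v := by
  induction n generalizing x with
  | zero => exact i.elim0
  | succ n ih =>
    induction i using Fin.cases with
    | zero => exact iteratedFDeriv_comp_swap_zero_one hf v
    | succ i =>
      have hhead : (v ∘ Equiv.swap i.succ.castSucc i.succ.succ) 0 = v 0 := by
        rw [Function.comp_apply, Equiv.swap_apply_of_ne_of_ne] <;> simp [Fin.ext_iff]
      have htail : Fin.tail (v ∘ Equiv.swap i.succ.castSucc i.succ.succ) =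
          Fin.tail v ∘ Equiv.swap i.castSucc i.succ := by
        ext j
        simp only [Fin.tail, Function.comp_apply, ← Fin.succ_castSucc,
          (Fin.succ_injective _).swap_apply]
      rw [iteratedFDeriv_succ_apply_eq_fderiv hf, iteratedFDeriv_succ_apply_eq_fderiv hf,
        hhead, htail]
      congr 1
      refine EventuallyEq.fderiv_eq ?_
      filter_upwards [(hf.of_le (by norm_cast; omega : ((n + 1 : ℕ) : WithTop ℕ∞) ≤ _)).eventually
        (by simp)] with y hy
      exact ih hy i _

-- Unlike `ContDiffAt.iteratedFDeriv_comp_perm`, this does not require analyticity of `f`.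
lemma iteratedFDeriv_comp_perm_of_contDiffAt (hf : ContDiffAt 𝕜 n f x)
    (σ : Equiv.Perm (Fin n)) (v : Fin n → E) :
    iteratedFDeriv 𝕜 n f x (v ∘ σ) = iteratedFDeriv 𝕜 n f x v := by
  cases n with
  | zero => rw [Subsingleton.elim (v ∘ σ) v]
  | succ n =>
    have hσ : σ ∈ Submonoid.closure
        (Set.range fun i : Fin n => Equiv.swap i.castSucc i.succ) := by
      simp [Equiv.Perm.mclosure_swap_castSucc_succ]
    induction hσ using Submonoid.closure_induction generalizing v with
    | one => rfl
    | mul σ τ _ _ ihσ ihτ =>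
      rw [Equiv.Perm.coe_mul, ← Function.comp_assoc, ihτ, ihσ]
    | mem τ hτ =>
      obtain ⟨i, rfl⟩ := hτ
      exact iteratedFDeriv_comp_swap_castSucc_succ hf i v

end Symmetry

section Flatness

variable {𝕜 E F : Type*} [NontriviallyNormedField 𝕜] [NormedAddCommGroup E] [NormedSpace 𝕜 E]
  [NormedAddCommGroup F] [NormedSpace 𝕜 F] {f g : E → F} {x : E} {m n : ℕ}

lemma contDiffAt_fderiv_apply (hf : ContDiffAt 𝕜 (n + 1 : ℕ) f x) (a : E) :
    ContDiffAt 𝕜 n (fun y => fderiv 𝕜 f y a) x :=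
  (hf.fderiv_right (by norm_cast)).clm_apply contDiffAt_const

variable (𝕜) in
/-- `f` is of class `C^n` at `x` and its Taylor polynomial of degree `n` at `x` is zero. Smoothness
is part of the notion because `iteratedFDeriv` takes the value zero at non-differentiable
functions. -/
structure IsFlatAt (n : ℕ) (f : E → F) (x : E) : Prop where
  contDiffAt : ContDiffAt 𝕜 n f x
  iteratedFDeriv_eq_zero : ∀ m ≤ n, iteratedFDeriv 𝕜 m f x = 0

namespace IsFlatAt

lemma mono (hf : IsFlatAt 𝕜 n f x) (hmn : m ≤ n) : IsFlatAt 𝕜 m f x :=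
  ⟨hf.contDiffAt.of_le (by exact_mod_cast hmn),
    fun k hk => hf.iteratedFDeriv_eq_zero k (hk.trans hmn)⟩

lemma congr_of_eventuallyEq (hf : IsFlatAt 𝕜 n f x) (hgf : g =ᶠ[𝓝 x] f) : IsFlatAt 𝕜 n g x :=
  ⟨hf.contDiffAt.congr_of_eventuallyEq hgf, fun k hk => by
    rw [(hgf.iteratedFDeriv 𝕜 k).self_of_nhds, hf.iteratedFDeriv_eq_zero k hk]⟩

lemma apply_eq_zero (hf : IsFlatAt 𝕜 n f x) : f x = 0 := by
  rw [← norm_eq_zero, ← norm_iteratedFDeriv_zero (𝕜 := 𝕜),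
    hf.iteratedFDeriv_eq_zero 0 n.zero_le, norm_zero]

lemma add (hf : IsFlatAt 𝕜 n f x) (hg : IsFlatAt 𝕜 n g x) :
    IsFlatAt 𝕜 n (fun y => f y + g y) x where
  contDiffAt := hf.contDiffAt.add hg.contDiffAt
  iteratedFDeriv_eq_zero k hk := by
    have hk' : (k : WithTop ℕ∞) ≤ n := by exact_mod_cast hk
    rw [fun_iteratedFDeriv_add_apply (hf.contDiffAt.of_le hk') (hg.contDiffAt.of_le hk'),
      hf.iteratedFDeriv_eq_zero k hk, hg.iteratedFDeriv_eq_zero k hk, add_zero]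

lemma sum {ι : Type*} {s : Finset ι} {f : ι → E → F} (hf : ∀ i ∈ s, IsFlatAt 𝕜 n (f i) x) :
    IsFlatAt 𝕜 n (fun y => ∑ i ∈ s, f i y) x where
  contDiffAt := ContDiffAt.sum fun i hi => (hf i hi).contDiffAt
  iteratedFDeriv_eq_zero k hk := by
    rw [iteratedFDeriv_fun_sum_apply fun i hi =>
        (hf i hi).contDiffAt.of_le (by exact_mod_cast hk),
      Finset.sum_eq_zero fun i hi => (hf i hi).iteratedFDeriv_eq_zero k hk]

lemma mul_contDiffAt {A : Type*} [NormedRing A] [NormedAlgebra 𝕜 A] {f g : E → A}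
    (hf : IsFlatAt 𝕜 n f x) (hg : ContDiffAt 𝕜 n g x) :
    IsFlatAt 𝕜 n (fun y => f y * g y) x where
  contDiffAt := hf.contDiffAt.mul hg
  iteratedFDeriv_eq_zero k hk := by
    obtain ⟨s, hs, hfs⟩ := hf.contDiffAt.contDiffOn le_rfl (by simp)
    obtain ⟨t, ht, hgt⟩ := hg.contDiffOn le_rfl (by simp)
    obtain ⟨U, hU, hUo, hxU⟩ := mem_nhds_iff.1 (inter_mem hs ht)
    have hleibniz := norm_iteratedFDerivWithin_mul_le
      (hfs.mono (hU.trans Set.inter_subset_left)) (hgt.mono (hU.trans Set.inter_subset_right))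
      hUo.uniqueDiffOn hxU (n := k) (by exact_mod_cast hk)
    rw [iteratedFDerivWithin_of_isOpen k hUo hxU] at hleibniz
    refine norm_le_zero_iff.1 (hleibniz.trans_eq (Finset.sum_eq_zero fun j hj => ?_))
    have hjn : j ≤ n := (Nat.lt_succ_iff.1 (Finset.mem_range.1 hj)).trans hk
    rw [iteratedFDerivWithin_of_isOpen j hUo hxU, hf.iteratedFDeriv_eq_zero j hjn, norm_zero,
      mul_zero, zero_mul]

protected lemma fderiv (hf : IsFlatAt 𝕜 (n + 1) f x) : IsFlatAt 𝕜 n (fderiv 𝕜 f) x where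
  contDiffAt := hf.contDiffAt.fderiv_right (by norm_cast)
  iteratedFDeriv_eq_zero k hk := by
    rw [← norm_eq_zero, norm_iteratedFDeriv_fderiv, hf.iteratedFDeriv_eq_zero _ (by omega),
      norm_zero]

lemma fderiv_apply (hf : IsFlatAt 𝕜 (n + 1) f x) (a : E) :
    IsFlatAt 𝕜 n (fun y => fderiv 𝕜 f y a) x where
  contDiffAt := contDiffAt_fderiv_apply hf.contDiffAt a
  iteratedFDeriv_eq_zero k hk := by
    refine norm_le_zero_iff.1 ((norm_iteratedFDeriv_clm_apply_const hf.fderiv.contDiffAt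
      (by exact_mod_cast hk)).trans_eq ?_)
    rw [hf.fderiv.iteratedFDeriv_eq_zero k hk, norm_zero, mul_zero]

end IsFlatAt

end Flatness

section Taylor

variable {E F : Type*} [NormedAddCommGroup E] [NormedSpace ℝ E] [NormedAddCommGroup F]
  [NormedSpace ℝ F] {f : E → F} {x₀ : E} {n : ℕ}

lemma isBigO_norm_sub_pow_succ_of_fderiv (hf : ∀ᶠ x in 𝓝 x₀, DifferentiableAt ℝ f x)
    (hf' : (fun x => ‖fderiv ℝ f x‖) =O[𝓝 x₀] fun x => ‖x - x₀‖ ^ n) :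
    (fun x => f x - f x₀) =O[𝓝 x₀] fun x => ‖x - x₀‖ ^ (n + 1) := by
  obtain ⟨C, hC, hbound⟩ := hf'.exists_pos
  obtain ⟨r, hr, hball⟩ := Metric.eventually_nhds_iff_ball.1 (hf.and hbound.bound)
  refine IsBigO.of_bound C ?_
  filter_upwards [Metric.ball_mem_nhds x₀ hr] with x hx
  have hsub {y : E} (hy : y ∈ Metric.closedBall x₀ ‖x - x₀‖) : y ∈ Metric.ball x₀ r :=
    Metric.closedBall_subset_ball (mem_ball_iff_norm.1 hx) hy
  have hderiv : ∀ y ∈ Metric.closedBall x₀ ‖x - x₀‖, ‖fderiv ℝ f y‖ ≤ C * ‖x - x₀‖ ^ n := by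
    intro y hy
    have hyx : ‖y - x₀‖ ≤ ‖x - x₀‖ := mem_closedBall_iff_norm.1 hy
    calc ‖fderiv ℝ f y‖ ≤ C * ‖y - x₀‖ ^ n := by
          simpa only [norm_pow, norm_norm] using (hball y (hsub hy)).2
      _ ≤ C * ‖x - x₀‖ ^ n := by gcongr
  calc ‖f x - f x₀‖ ≤ C * ‖x - x₀‖ ^ n * ‖x - x₀‖ :=
        (convex_closedBall x₀ ‖x - x₀‖).norm_image_sub_le_of_norm_fderiv_le
          (fun y hy => (hball y (hsub hy)).1) hderiv (by simp) (by simp [dist_eq_norm])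
    _ = C * ‖‖x - x₀‖ ^ (n + 1)‖ := by rw [norm_pow, norm_norm, pow_succ, mul_assoc]

lemma IsFlatAt.isBigO (hflat : IsFlatAt ℝ n f x₀) (hf : ContDiffAt ℝ (n + 1 : ℕ) f x₀) :
    f =O[𝓝 x₀] fun x => ‖x - x₀‖ ^ (n + 1) := by
  have hderiv (k : ℕ) : ∀ j, j + k = n + 1 →
      iteratedFDeriv ℝ j f =O[𝓝 x₀] fun x => ‖x - x₀‖ ^ k := by
    induction k with
    | zero =>
      intro j hj
      simpa using (hf.iteratedFDeriv_right (m := 0) (i := j)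
        (by norm_cast; omega)).continuousAt.norm.isBoundedUnder_le
    | succ k ih =>
      intro j hj
      have hdiff : ∀ᶠ x in 𝓝 x₀, DifferentiableAt ℝ (iteratedFDeriv ℝ j f) x :=
        (hf.eventually (by simp)).mono fun x hx =>
          hx.differentiableAt_iteratedFDeriv (by norm_cast; omega)
      have hfderiv :
          (fun x => ‖fderiv ℝ (iteratedFDeriv ℝ j f) x‖) =O[𝓝 x₀] fun x => ‖x - x₀‖ ^ k := by
        simpa only [norm_fderiv_iteratedFDeriv, isBigO_norm_left] using ih (j + 1) (by omega)
      simpa [hflat.iteratedFDeriv_eq_zero j (by omega)] using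
        isBigO_norm_sub_pow_succ_of_fderiv hdiff hfderiv
  exact isBigO_norm_left.1 ((hderiv (n + 1) 0 (by omega)).norm_left.congr_left fun x =>
    norm_iteratedFDeriv_zero)

/-- The Taylor polynomial of degree `n` of `f` at `x₀`, as a function of the point `x`. -/
noncomputable def taylorSum (n : ℕ) (f : E → F) (x₀ x : E) : F :=
  ∑ k ∈ Finset.range (n + 1), (k.factorial : ℝ)⁻¹ • iteratedFDeriv ℝ k f x₀ fun _ => x - x₀

lemma iteratedFDeriv_taylorSum [CompleteSpace F] {m : ℕ} (hf : ContDiffAt ℝ n f x₀)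
    (hm : m ≤ n) : iteratedFDeriv ℝ m (taylorSum n f x₀) x₀ = iteratedFDeriv ℝ m f x₀ := by
  let p : FormalMultilinearSeries ℝ E F := fun k =>
    if k < n + 1 then (k.factorial : ℝ)⁻¹ • iteratedFDeriv ℝ k f x₀ else 0
  have hp {k : ℕ} (hk : k < n + 1) : p k = (k.factorial : ℝ)⁻¹ • iteratedFDeriv ℝ k f x₀ :=
    if_pos hk
  have hseries : HasFiniteFPowerSeriesOnBall (taylorSum n f x₀) p x₀ (n + 1) ⊤ := by
    refine .mk' (fun k hk => if_neg (by omega)) (by simp) fun y _ => ?_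
    simp only [taylorSum, add_sub_cancel_left]
    exact Finset.sum_congr rfl fun k hk => by simp [hp (Finset.mem_range.1 hk)]
  have hsymm (v : Fin m → E) (σ : Equiv.Perm (Fin m)) : p m (fun i => v (σ i)) =
      (m.factorial : ℝ)⁻¹ • iteratedFDeriv ℝ m f x₀ v := by
    rw [hp (by omega), smul_apply, ← iteratedFDeriv_comp_perm_of_contDiffAt
      (hf.of_le (by exact_mod_cast hm)) σ v]
    rfl
  have hfact : (m.factorial : ℝ) ≠ 0 := by exact_mod_cast m.factorial_ne_zero
  ext v
  rw [hseries.toHasFPowerSeriesOnBall.iteratedFDeriv_eq_sum_of_completeSpace]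
  simp [hsymm, Fintype.card_perm, ← Nat.cast_smul_eq_nsmul ℝ, smul_smul, hfact]

lemma contDiff_taylorSum {N : WithTop ℕ∞} : ContDiff ℝ N (taylorSum n f x₀) :=
  ContDiff.sum fun _ _ => ((ContinuousMultilinearMap.contDiff _).comp
    (contDiff_pi.2 fun _ => contDiff_id.sub contDiff_const)).const_smul _

lemma isFlatAt_taylorSum_sub [CompleteSpace F] (hf : ContDiffAt ℝ n f x₀) :
    IsFlatAt ℝ n (fun x => taylorSum n f x₀ x - f x) x₀ where
  contDiffAt := contDiff_taylorSum.contDiffAt.sub hf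
  iteratedFDeriv_eq_zero m hm := by
    rw [fun_iteratedFDeriv_sub_apply contDiff_taylorSum.contDiffAt
      (hf.of_le (by exact_mod_cast hm)), iteratedFDeriv_taylorSum hf hm, sub_self]

end Taylor

section Polynomial

variable {ι : Type*}

/-- The complex polynomial `P` as a function of the real coordinates of a point of Euclidean
space. -/
noncomputable def polyFun (P : MvPolynomial ι ℂ) (x : EuclideanSpace ℝ ι) : ℂ :=
  MvPolynomial.eval (fun i => (x i : ℂ)) P

lemma contDiff_polyFun [Fintype ι] (P : MvPolynomial ι ℂ) {N : WithTop ℕ∞} :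
    ContDiff ℝ N (polyFun P) := by
  unfold polyFun
  induction P using MvPolynomial.induction_on with
  | C a => simpa using contDiff_const
  | add P Q hP hQ => simpa using hP.add hQ
  | mul_X P i hP =>
    simpa using hP.mul (Complex.ofRealCLM.comp (EuclideanSpace.proj i)).contDiff

lemma fderiv_polyFun_single [Finite ι] [DecidableEq ι] (P : MvPolynomial ι ℂ)
    (x : EuclideanSpace ℝ ι) (i : ι) :
    fderiv ℝ (polyFun P) x (EuclideanSpace.single i 1) = polyFun (MvPolynomial.pderiv i P) x := by
  have := Fintype.ofFinite ι
  have hdiff (Q : MvPolynomial ι ℂ) : DifferentiableAt ℝ (polyFun Q) x :=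
    (contDiff_polyFun Q).contDiffAt.differentiableAt one_ne_zero
  induction P using MvPolynomial.induction_on with
  | C a =>
    have hC : polyFun (MvPolynomial.C a : MvPolynomial ι ℂ) = fun _ => a := by
      ext y; simp [polyFun]
    simp [hC, polyFun]
  | add P Q hP hQ =>
    have hadd : polyFun (P + Q) = polyFun P + polyFun Q := by
      ext y; simp [polyFun]
    rw [hadd, fderiv_add (hdiff P) (hdiff Q), add_apply, hP, hQ]
    simp [polyFun]
  | mul_X P j hP =>
    let coord : EuclideanSpace ℝ ι →L[ℝ] ℂ := Complex.ofRealCLM.comp (EuclideanSpace.proj j)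
    have hmul : polyFun (P * MvPolynomial.X j) = fun y => polyFun P y * coord y := by
      ext y; simp [polyFun, coord]
    rw [hmul, fderiv_fun_mul (hdiff P) coord.differentiableAt, coord.fderiv]
    have hpderiv : polyFun (MvPolynomial.pderiv i (P * MvPolynomial.X j)) x =
        polyFun P x * coord (EuclideanSpace.single i 1) +
          coord x * polyFun (MvPolynomial.pderiv i P) x := by
      rcases eq_or_ne j i with rfl | hji
      · simp [polyFun, coord]
      · simp [polyFun, coord, MvPolynomial.pderiv_X, hji]
    rw [hpderiv, add_apply, smul_apply, smul_apply, hP, smul_eq_mul, smul_eq_mul]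

lemma exists_polyFun_eq_multilinear [Finite ι] {k : ℕ} (A : EuclideanSpace ℝ ι [×k]→L[ℝ] ℂ)
    (x₀ : EuclideanSpace ℝ ι) :
    ∃ P : MvPolynomial ι ℂ, P.totalDegree ≤ k ∧ ∀ x, polyFun P x = A fun _ => x - x₀ := by
  classical
  have := Fintype.ofFinite ι
  refine ⟨∑ r : Fin k → ι, MvPolynomial.C (A fun i => EuclideanSpace.single (r i) 1) *
    ∏ i, (MvPolynomial.X (r i) - MvPolynomial.C (x₀ (r i) : ℂ)), ?_, fun x => ?_⟩
  · refine MvPolynomial.totalDegree_finsetSum_le fun r _ => ?_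
    have hfactor (i : Fin k) : (MvPolynomial.X (r i) -
        MvPolynomial.C (x₀ (r i) : ℂ) : MvPolynomial ι ℂ).totalDegree ≤ 1 :=
      (MvPolynomial.totalDegree_sub_C_le _ _).trans_eq (MvPolynomial.totalDegree_X _)
    calc _ ≤ 0 + ∑ i, (MvPolynomial.X (r i) -
          MvPolynomial.C (x₀ (r i) : ℂ) : MvPolynomial ι ℂ).totalDegree :=
          (MvPolynomial.totalDegree_mul _ _).trans (add_le_add
            (MvPolynomial.totalDegree_C _).le (MvPolynomial.totalDegree_finsetProd _ _))
      _ ≤ k := by simpa using Finset.sum_le_card_nsmul Finset.univ _ 1 fun i _ => hfactor i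
  · have hbasis : x - x₀ = ∑ i, (x - x₀) i • EuclideanSpace.single i (1 : ℝ) := by
      ext j
      simp [Finset.sum_apply, Pi.single_apply]
    rw [hbasis, ContinuousMultilinearMap.map_sum, polyFun, map_sum]
    refine Finset.sum_congr rfl fun r _ => ?_
    rw [ContinuousMultilinearMap.map_smul_univ, Complex.real_smul, mul_comm]
    simp

lemma exists_polyFun_eq_taylorSum [Fintype ι] (n : ℕ) (f : EuclideanSpace ℝ ι → ℂ)
    (x₀ : EuclideanSpace ℝ ι) :
    ∃ P : MvPolynomial ι ℂ, P.totalDegree ≤ n ∧ polyFun P = taylorSum n f x₀ := by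
  choose Q hdeg hQ using fun k : ℕ => exists_polyFun_eq_multilinear
    ((k.factorial : ℝ)⁻¹ • iteratedFDeriv ℝ k f x₀) x₀
  refine ⟨∑ k ∈ Finset.range (n + 1), Q k, MvPolynomial.totalDegree_finsetSum_le fun k hk =>
    (hdeg k).trans (Nat.lt_succ_iff.1 (Finset.mem_range.1 hk)), funext fun x => ?_⟩
  rw [polyFun, map_sum]
  exact Finset.sum_congr rfl fun k _ => hQ k x

end Polynomial

section PhaseOperator

variable {E ι : Type*} [NormedAddCommGroup E] [NormedSpace ℝ E] [Fintype ι]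

/-- The sum of the second derivatives of `f` in the directions `e i`. For the standard basis of
Euclidean space this is the Laplacian of `f`. -/
noncomputable def laplacianAlong (e : ι → E) (f : E → ℂ) (x : E) : ℂ :=
  ∑ i, fderiv ℝ (fun y => fderiv ℝ f y (e i)) x (e i)

/-- The nonlinear operator `Δf + ∇f · ∇f` satisfied by phases: it is characterised by
`Δ(exp f) = exp f * phaseOperator f`. The product `∇f · ∇f` is bilinear, not Hermitian. -/
noncomputable def phaseOperator (e : ι → E) (f : E → ℂ) (x : E) : ℂ :=
  laplacianAlong e f x + ∑ i, fderiv ℝ f x (e i) ^ 2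

variable (e : ι → E) {f g u v : E → ℂ} {x x₀ : E} {n : ℕ}

lemma laplacianAlong_congr (hfg : f =ᶠ[𝓝 x] g) : laplacianAlong e f x = laplacianAlong e g x :=
  Finset.sum_congr rfl fun i _ => by
    have hi : (fun y => fderiv ℝ f y (e i)) =ᶠ[𝓝 x] fun y => fderiv ℝ g y (e i) :=
      hfg.fderiv.fun_comp (· (e i))
    rw [hi.fderiv_eq]

lemma differentiableAt_fderiv_apply (hf : ContDiffAt ℝ 2 f x) (a : E) :
    DifferentiableAt ℝ (fun y => fderiv ℝ f y a) x :=
  (contDiffAt_fderiv_apply (n := 1) (by exact_mod_cast hf) a).differentiableAt (by simp)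

lemma eventually_differentiableAt (hf : ContDiffAt ℝ 2 f x) :
    ∀ᶠ y in 𝓝 x, DifferentiableAt ℝ f y :=
  (hf.eventually (by simp)).mono fun _ hy => hy.differentiableAt two_ne_zero

lemma laplacianAlong_cexp (hv : ContDiffAt ℝ 2 v x) :
    laplacianAlong e (fun y => Complex.exp (v y)) x =
      Complex.exp (v x) * phaseOperator e v x := by
  have hsecond (a : E) : fderiv ℝ (fun y => fderiv ℝ (fun z => Complex.exp (v z)) y a) x a =
      Complex.exp (v x) * (fderiv ℝ (fun y => fderiv ℝ v y a) x a + fderiv ℝ v x a ^ 2) := by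
    have hfirst : (fun y => fderiv ℝ (fun z => Complex.exp (v z)) y a) =ᶠ[𝓝 x]
        fun y => Complex.exp (v y) * fderiv ℝ v y a :=
      (eventually_differentiableAt hv).mono fun y hy => by
        simp [hy.hasFDerivAt.cexp.fderiv]
    have hexp := (hv.differentiableAt two_ne_zero).hasFDerivAt.cexp
    rw [hfirst.fderiv_eq, fderiv_fun_mul hexp.differentiableAt
      (differentiableAt_fderiv_apply hv a), hexp.fderiv]
    simp only [add_apply, smul_apply, smul_eq_mul]
    ring
  simp only [laplacianAlong, phaseOperator, hsecond, ← Finset.mul_sum, Finset.sum_add_distrib]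

lemma phaseOperator_add_eq_zero {c : ℂ} (hv : ContDiffAt ℝ 2 v x)
    (huv : u =ᶠ[𝓝 x] fun y => Complex.exp (v y)) (hu : laplacianAlong e u x + c * u x = 0) :
    phaseOperator e v x + c = 0 := by
  rw [laplacianAlong_congr e huv, laplacianAlong_cexp e hv, huv.self_of_nhds, mul_comm c,
    ← mul_add] at hu
  exact (mul_eq_zero.1 hu).resolve_left (Complex.exp_ne_zero _)

lemma laplacianAlong_sub (hf : ContDiffAt ℝ 2 f x) (hg : ContDiffAt ℝ 2 g x) :
    laplacianAlong e (fun y => f y - g y) x = laplacianAlong e f x - laplacianAlong e g x := by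
  have hfirst (a : E) : (fun y => fderiv ℝ (fun z => f z - g z) y a) =ᶠ[𝓝 x]
      fun y => fderiv ℝ f y a - fderiv ℝ g y a := by
    filter_upwards [eventually_differentiableAt hf, eventually_differentiableAt hg] with y hfy hgy
    rw [fderiv_fun_sub hfy hgy, sub_apply]
  rw [laplacianAlong, laplacianAlong, laplacianAlong, ← Finset.sum_sub_distrib]
  refine Finset.sum_congr rfl fun i _ => ?_
  rw [(hfirst (e i)).fderiv_eq, fderiv_fun_sub (differentiableAt_fderiv_apply hf _)
    (differentiableAt_fderiv_apply hg _), sub_apply]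

lemma phaseOperator_sub (hf : ContDiffAt ℝ 2 f x) (hg : ContDiffAt ℝ 2 g x) :
    phaseOperator e f x - phaseOperator e g x = laplacianAlong e (fun y => f y - g y) x +
      ∑ i, fderiv ℝ (fun y => f y - g y) x (e i) * (fderiv ℝ f x (e i) + fderiv ℝ g x (e i)) := by
  have hsq : ∑ i, fderiv ℝ (fun y => f y - g y) x (e i) *
      (fderiv ℝ f x (e i) + fderiv ℝ g x (e i)) =
      ∑ i, fderiv ℝ f x (e i) ^ 2 - ∑ i, fderiv ℝ g x (e i) ^ 2 := by
    rw [← Finset.sum_sub_distrib, fderiv_fun_sub (hf.differentiableAt two_ne_zero)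
      (hg.differentiableAt two_ne_zero)]
    exact Finset.sum_congr rfl fun i _ => by rw [sub_apply]; ring
  rw [laplacianAlong_sub e hf hg, hsq, phaseOperator, phaseOperator]
  ring

lemma IsFlatAt.laplacianAlong (hf : IsFlatAt ℝ (n + 2) f x₀) :
    IsFlatAt ℝ n (laplacianAlong e f) x₀ :=
  .sum fun i _ => (hf.fderiv_apply (e i)).fderiv_apply (e i)

lemma isFlatAt_phaseOperator_sub (hf : ContDiffAt ℝ (n + 2 : ℕ) f x₀)
    (hg : ContDiffAt ℝ (n + 2 : ℕ) g x₀) (hfg : IsFlatAt ℝ (n + 2) (fun x => f x - g x) x₀) :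
    IsFlatAt ℝ n (fun x => phaseOperator e f x - phaseOperator e g x) x₀ := by
  have htwo {h : E → ℂ} (hh : ContDiffAt ℝ (n + 2 : ℕ) h x₀) :
      ∀ᶠ x in 𝓝 x₀, ContDiffAt ℝ 2 h x :=
    (hh.of_le (by norm_cast; omega)).eventually (by simp)
  have hsmooth (i : ι) :
      ContDiffAt ℝ n (fun x => fderiv ℝ f x (e i) + fderiv ℝ g x (e i)) x₀ :=
    (contDiffAt_fderiv_apply (hf.of_le (by norm_cast; omega)) _).add
      (contDiffAt_fderiv_apply (hg.of_le (by norm_cast; omega)) _)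
  refine ((hfg.laplacianAlong e).add (.sum fun i (_ : i ∈ Finset.univ) =>
    ((hfg.mono (by omega)).fderiv_apply (e i)).mul_contDiffAt (hsmooth i))).congr_of_eventuallyEq ?_
  filter_upwards [htwo hf, htwo hg] with x hfx hgx
  exact phaseOperator_sub e hfx hgx

lemma phaseOperator_polyFun [DecidableEq ι] (P : MvPolynomial ι ℂ) (x : EuclideanSpace ℝ ι) :
    phaseOperator (fun i => EuclideanSpace.single i 1) (polyFun P) x =
      ∑ i, polyFun (MvPolynomial.pderiv i (MvPolynomial.pderiv i P)) x +
        ∑ i, polyFun (MvPolynomial.pderiv i P) x ^ 2 := by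
  simp only [phaseOperator, laplacianAlong, fderiv_polyFun_single]

end PhaseOperator

section Exponential

variable {E : Type*} [NormedAddCommGroup E] [NormedSpace ℝ E] {u : E → ℂ} {x₀ : E}

lemma exists_contDiffAt_cexp_eventuallyEq {N : WithTop ℕ∞} (hu : ContDiffAt ℝ N u x₀)
    (hu₀ : u x₀ ≠ 0) :
    ∃ v : E → ℂ, ContDiffAt ℝ N v x₀ ∧ u =ᶠ[𝓝 x₀] fun x => Complex.exp (v x) := by
  -- Dividing by `u x₀` moves the base point to `1`, away from the branch cut of `Complex.log`.
  refine ⟨fun x => Complex.log (u x / u x₀) + Complex.log (u x₀), ?_, ?_⟩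
  · have hlog : ContDiffAt ℝ N Complex.log (u x₀ / u x₀) :=
      (Complex.contDiffAt_log (by simp [hu₀])).restrict_scalars ℝ
    exact (hlog.comp x₀ (hu.div_const _)).add contDiffAt_const
  · filter_upwards [hu.continuousAt.eventually_ne hu₀] with x hx
    rw [Complex.exp_add, Complex.exp_log (div_ne_zero hx hu₀), Complex.exp_log hu₀,
      div_mul_cancel₀ _ hu₀]

lemma isBigO_cexp_sub_cexp {α : Type*} {l : Filter α} {f g : α → ℂ} {c : ℂ}
    (hf : Tendsto f l (𝓝 c)) (hg : Tendsto g l (𝓝 c)) :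
    (fun x => Complex.exp (f x) - Complex.exp (g x)) =O[l] fun x => f x - g x :=
  (Complex.hasStrictDerivAt_exp c).hasStrictFDerivAt.isBigO_sub.comp_tendsto (hf.prodMk_nhds hg)

end Exponential

lemma exists_isOpen_forall_norm_le_of_isBigO {X F : Type*} [TopologicalSpace X] [Norm F] {x₀ : X}
    {f : X → F} {g : X → ℝ} {s : Set X} (hg : ∀ x, 0 ≤ g x) (hfg : f =O[𝓝 x₀] g) (hs : s ∈ 𝓝 x₀) :
    ∃ C : ℝ, 0 < C ∧ ∃ U, IsOpen U ∧ x₀ ∈ U ∧ U ⊆ s ∧ ∀ x ∈ U, ‖f x‖ ≤ C * g x := by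
  obtain ⟨C, hC, hbound⟩ := hfg.exists_pos
  obtain ⟨U, hU, hUo, hxU⟩ := mem_nhds_iff.1 (inter_mem hs hbound.bound)
  refine ⟨C, hC, U, hUo, hxU, fun x hx => (hU hx).1, fun x hx =>
    (hU hx).2.trans_eq (by rw [Real.norm_of_nonneg (hg x)])⟩

theorem stmt_14_general {ι : Type*} [Fintype ι] [DecidableEq ι] {p : ℕ} (hp : 2 ≤ p)
    {x₀ : EuclideanSpace ℝ ι} {V u : EuclideanSpace ℝ ι → ℂ}
    (hu : ContDiffAt ℝ (p + 1 : ℕ) u x₀)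
    (hpde : ∀ᶠ x in 𝓝 x₀,
      laplacianAlong (fun i : ι => EuclideanSpace.single i (1 : ℝ)) u x + V x * u x = 0)
    (hu₀ : u x₀ ≠ 0) :
    ∃ P : MvPolynomial ι ℂ, P.totalDegree ≤ p ∧
      IsFlatAt ℝ (p - 2) (fun x =>
        ∑ i, polyFun (MvPolynomial.pderiv i (MvPolynomial.pderiv i P)) x +
          ∑ i, polyFun (MvPolynomial.pderiv i P) x ^ 2 + V x) x₀ ∧
      (fun x => u x - Complex.exp (polyFun P x)) =O[𝓝 x₀] fun x => ‖x - x₀‖ ^ (p + 1) := by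
  obtain ⟨q, rfl⟩ := Nat.exists_eq_add_of_le' hp
  obtain ⟨v, hv, huv⟩ := exists_contDiffAt_cexp_eventuallyEq hu hu₀
  have hv' : ContDiffAt ℝ (q + 2 : ℕ) v x₀ := hv.of_le (by norm_cast; omega)
  obtain ⟨P, hdeg, hP⟩ := exists_polyFun_eq_taylorSum (q + 2) v x₀
  have hflat : IsFlatAt ℝ (q + 2) (fun x => polyFun P x - v x) x₀ :=
    hP ▸ isFlatAt_taylorSum_sub hv'
  refine ⟨P, hdeg, ?_, ?_⟩
  · refine (isFlatAt_phaseOperator_sub (fun i : ι => EuclideanSpace.single i 1)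
      (contDiff_polyFun P).contDiffAt hv' hflat).congr_of_eventuallyEq ?_
    have hv₂ : ContDiffAt ℝ 2 v x₀ := hv'.of_le (by norm_cast)
    filter_upwards [hv₂.eventually (by simp), huv.eventually_nhds, hpde] with x hvx huvx hx
    have hphase := phaseOperator_add_eq_zero _ hvx huvx hx
    rw [← phaseOperator_polyFun]
    linear_combination hphase
  · have hv₀ : polyFun P x₀ = v x₀ := sub_eq_zero.1 hflat.apply_eq_zero
    have hexp := isBigO_cexp_sub_cexp (hv₀ ▸ (contDiff_polyFun P (N := 0)).continuous.tendsto x₀)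
      hv.continuousAt.tendsto
    have hbound := hflat.isBigO ((contDiff_polyFun P).contDiffAt.sub hv)
    exact (hexp.trans hbound).neg_left.congr' (huv.mono fun x hx => by simp [hx]) .rfl

/-- GPW best approximation for the variable-coefficient Helmholtz
operator `Δ + κ²`: if `u` is a `C^{p+2}` solution of `Δu + κ²u = 0` on an open
neighborhood `Ω` of `x0` with `u(x0) ≠ 0` and `κ²` of class `C^{p−2}` on `Ω`, then there
is a polynomial `P` of total degree `≤ p` satisfying the quasi-Trefftz property at `x0`,
a constant `C > 0` and an open neighborhood `U ⊆ Ω` of `x0` such that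
`|u(x) − e^{P(x)}| ≤ C |x − x0|^{p+1}` on `U`. -/
theorem stmt_14 (d p : ℕ) (hd : 1 ≤ d) (hp : 2 ≤ p)
    (Ω : Set (EuclideanSpace ℝ (Fin d))) (hΩ : IsOpen Ω)
    (x0 : EuclideanSpace ℝ (Fin d)) (hx0 : x0 ∈ Ω)
    (κ u : EuclideanSpace ℝ (Fin d) → ℂ)
    (hκ : ContDiffOn ℝ (↑(p - 2) : ℕ∞) (fun x => κ x ^ 2) Ω)
    (hu : ContDiffOn ℝ (↑(p + 2) : ℕ∞) u Ω)
    (hpde : ∀ x ∈ Ω,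
      (∑ i : Fin d, fderiv ℝ (fun y => fderiv ℝ u y (EuclideanSpace.single i (1 : ℝ))) x
          (EuclideanSpace.single i (1 : ℝ))) + κ x ^ 2 * u x = 0)
    (hu0 : u x0 ≠ 0) :
    ∃ P : MvPolynomial (Fin d) ℂ,
      P.totalDegree ≤ p ∧
      (∀ m : ℕ, m ≤ p - 2 →
        iteratedFDeriv ℝ m (fun x : EuclideanSpace ℝ (Fin d) =>
          (∑ i : Fin d, MvPolynomial.eval (fun i' => (x i' : ℂ))
              (MvPolynomial.pderiv i (MvPolynomial.pderiv i P))) +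
            (∑ i : Fin d,
              (MvPolynomial.eval (fun i' => (x i' : ℂ)) (MvPolynomial.pderiv i P)) ^ 2) +
            κ x ^ 2) x0 = 0) ∧
      ∃ C : ℝ, 0 < C ∧
        ∃ U : Set (EuclideanSpace ℝ (Fin d)), IsOpen U ∧ x0 ∈ U ∧ U ⊆ Ω ∧
          ∀ x ∈ U,
            ‖u x - Complex.exp (MvPolynomial.eval (fun i => (x i : ℂ)) P)‖ ≤
              C * ‖x - x0‖ ^ (p + 1) := by
  have hu' : ContDiffAt ℝ (p + 1 : ℕ) u x0 := (hu.contDiffAt (hΩ.mem_nhds hx0)).of_le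
    (WithTop.coe_le_coe.2 (Nat.cast_le.2 (Nat.le_succ (p + 1))))
  obtain ⟨P, hdeg, hflat, hbound⟩ := stmt_14_general (V := fun x => κ x ^ 2) hp hu'
    (eventually_of_mem (hΩ.mem_nhds hx0) hpde) hu0
  exact ⟨P, hdeg, hflat.iteratedFDeriv_eq_zero, exists_isOpen_forall_norm_le_of_isBigO
    (fun x => by positivity) hbound (hΩ.mem_nhds hx0)⟩
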